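/- Let m be a positive integer and f₀ : ℝ^m → ℝ a bounded continuous function; for t ∈ (0, 1) set f_t = HJ_t f₀ and assume each f_t is differentiable on ℝ^m. Let γ : [0, 1] → ℝ^m be the affine segment γ(t) = (1 − t)·γ(0) + t·γ(1) and assume γ'(t) = ∇f_t(γ(t)) for all t ∈ (0, 1). Let α : (0, 1) → ℝ^m be a locally Lipschitz curve with α'(t) = ∇f_t(α(t)) for all t ∈ (0, 1). If α(t₀) = γ(t₀) for some t₀ ∈ (0, 1), then α(t) = γ(t) for all t ∈ (0, 1). -/

import Mathlib

/-!
The gradient field `∇f_t` need not be Lipschitz, but it is Lipschitz *at the points of* `γ`, and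
comparing `α` with `γ` needs only this.

Every `f_t` is touched from above at each point `x` by the paraboloid
`z ↦ f₀ y + ‖z - y‖² / (2t)`, where `y` is a minimizer in the definition of `f_t x`; since `f_t` is
differentiable, `∇f_t x = (x - y) / t` (`exists_min_gradient`). Along `γ`, whose velocity `v` is
constant, this forces `y = γ 0`, so `f_t (γ t) = f₀ (γ 0) + t ‖v‖² / 2`. The semigroup
inequality `f_T z ≤ f_s x + ‖z - x‖² / (2 (T - s))` (`hjShift_le_add`), applied to `z = γ T` with
`T > s`, then shows that `f_s` is touched from *below* at `γ s` by a paraboloid with gradient `v`.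
A function with paraboloids above at all points and one below at `γ s` satisfies
`‖∇f_s x - v‖ ≤ L ‖x - γ s‖` (`norm_sub_le_of_paraboloids`), with `L` locally uniform in
`s ∈ (0, 1)`. Grönwall's inequality, forward and backward in time, gives `α = γ`.
-/

/-- The Hamilton–Jacobi shift of `f` for time `t`:
`HJ_t f (x) = ⨅_{y} (f y + ‖x - y‖² / (2t))`. -/
noncomputable def hjShift {E : Type*} [NormedAddCommGroup E] [InnerProductSpace ℝ E]
    (t : ℝ) (f : E → ℝ) (x : E) : ℝ :=
  ⨅ y : E, (f y + ‖x - y‖ ^ 2 / (2 * t))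

/-! ### Touching paraboloids -/

section HamiltonJacobi

variable {E : Type*} [NormedAddCommGroup E] [InnerProductSpace ℝ E]

lemma hjShift_le {f : E → ℝ} {C : ℝ} (hC : ∀ x, |f x| ≤ C) {t : ℝ} (ht : 0 < t) (x y : E) :
    hjShift t f x ≤ f y + ‖x - y‖ ^ 2 / (2 * t) := by
  refine ciInf_le ⟨-C, ?_⟩ y
  rintro _ ⟨z, rfl⟩
  have h1 := (abs_le.1 (hC z)).1
  have h2 : 0 ≤ ‖x - z‖ ^ 2 / (2 * t) := by positivity
  simp only
  linarith

/-- The infimum defining the shift is attained, by coercivity and local compactness. -/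
lemma exists_hjShift_eq [FiniteDimensional ℝ E] {f : E → ℝ} (hf : Continuous f) {C : ℝ}
    (hC : ∀ x, |f x| ≤ C) {t : ℝ} (ht : 0 < t) (x : E) :
    ∃ y, hjShift t f x = f y + ‖x - y‖ ^ 2 / (2 * t) := by
  have : ProperSpace E := FiniteDimensional.proper ℝ E
  have hlim : Filter.Tendsto (fun y => f y + ‖x - y‖ ^ 2 / (2 * t)) (Filter.cocompact E)
      Filter.atTop := by
    refine Filter.tendsto_atTop_add_left_of_le _ (-C) (fun y => (abs_le.1 (hC y)).1) ?_
    refine Filter.Tendsto.atTop_div_const (by positivity) ?_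
    refine (Filter.tendsto_pow_atTop two_ne_zero).comp ?_
    refine Filter.tendsto_atTop_mono (fun y => ?_)
      (Filter.tendsto_atTop_add_const_right _ (-‖x‖) (tendsto_norm_cocompact_atTop (E := E)))
    have := norm_sub_norm_le y x
    rw [norm_sub_rev] at this
    linarith
  obtain ⟨y, hy⟩ := Continuous.exists_forall_le (by fun_prop) hlim
  exact ⟨y, le_antisymm (hjShift_le hC ht x y) (le_ciInf hy)⟩

/-- At a point of differentiability the minimizer is determined by the gradient: it is
`x - t • ∇f_t x`. The statement records the value of `f_t x` that this point realizes. -/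
lemma exists_min_gradient [FiniteDimensional ℝ E] {f : E → ℝ} (hf : Continuous f) {C : ℝ}
    (hC : ∀ x, |f x| ≤ C) {t : ℝ} (ht : 0 < t) (x : E)
    (hd : DifferentiableAt ℝ (hjShift t f) x) :
    hjShift t f x = f (x - t • gradient (hjShift t f) x) +
      t * ‖gradient (hjShift t f) x‖ ^ 2 / 2 := by
  obtain ⟨y, hy⟩ := exists_hjShift_eq hf hC ht x
  set q := gradient (hjShift t f) x with hq
  have hyq : t • q = x - y := by
    refine ext_inner_right ℝ fun h => ?_
    -- The gap between the touching paraboloid and `f_t`, along the line through `x` in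
    -- direction `h`, has a minimum at `0`.
    have h1 : HasFDerivAt (hjShift t f) (innerSL ℝ q) x := hd.hasGradientAt.hasFDerivAt
    have hl : HasDerivAt (fun r : ℝ => x + r • h) h 0 := by
      simpa using ((hasDerivAt_id (0 : ℝ)).smul_const h).const_add x
    have h2 : HasDerivAt (fun r : ℝ => hjShift t f (x + r • h)) (inner ℝ q h) 0 := by
      have := HasFDerivAt.comp_hasDerivAt (x := (0 : ℝ)) (f := fun r : ℝ => x + r • h)
        (l := hjShift t f) (l' := innerSL ℝ q) (f' := h) (by simpa using h1) hl
      simpa [Function.comp_def] using this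
    have h3 := ((hl.sub_const y).norm_sq.div_const (2 * t)).const_add (f y)
    have h4 : IsLocalMin (fun r : ℝ => f y + ‖x + r • h - y‖ ^ 2 / (2 * t)
        - hjShift t f (x + r • h)) 0 := by
      refine Filter.Eventually.of_forall fun r => ?_
      have := hjShift_le hC ht (x + r • h) y
      simp only [zero_smul, add_zero, hy]
      linarith
    have h5 := h4.hasDerivAt_eq_zero (h3.sub h2)
    simp only [zero_smul, add_zero] at h5
    rw [real_inner_smul_left]
    field_simp at h5
    linarith
  have hy' : x - t • q = y := by rw [hyq]; abel
  rw [hy, hy', ← hyq, norm_smul, Real.norm_of_nonneg ht.le]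
  field_simp

/-- One half of the semigroup property of the Hamilton–Jacobi shift. -/
lemma hjShift_le_add [FiniteDimensional ℝ E] {f : E → ℝ} (hf : Continuous f) {C : ℝ}
    (hC : ∀ x, |f x| ≤ C) {s T : ℝ} (hs : 0 < s) (hsT : s < T) (x z : E) :
    hjShift T f z ≤ hjShift s f x + ‖z - x‖ ^ 2 / (2 * (T - s)) := by
  obtain ⟨y, hy⟩ := exists_hjShift_eq hf hC hs x
  have h1 := hjShift_le hC (hs.trans hsT) z y
  have hr : 0 < T - s := sub_pos.2 hsT
  have h2 : ‖z - y‖ ≤ ‖z - x‖ + ‖x - y‖ := norm_sub_le_norm_sub_add_norm_sub z x y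
  -- Sedrakyan's inequality `(a + b)² / (r + s) ≤ a² / r + b² / s`.
  have h3 : ‖z - y‖ ^ 2 / (2 * T) ≤ ‖z - x‖ ^ 2 / (2 * (T - s)) + ‖x - y‖ ^ 2 / (2 * s) := by
    calc ‖z - y‖ ^ 2 / (2 * T) ≤ (‖z - x‖ + ‖x - y‖) ^ 2 / (2 * (T - s) + 2 * s) := by
          rw [show 2 * (T - s) + 2 * s = 2 * T by ring]
          have := hs.trans hsT
          gcongr
      _ ≤ _ := by
          rw [div_add_div _ _ (by positivity) (by positivity),
            div_le_div_iff₀ (by positivity) (by positivity)]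
          have := mul_nonneg hs.le hr.le
          nlinarith [sq_nonneg (s * ‖z - x‖ - (T - s) * ‖x - y‖)]
  linarith

/-- If `F` is touched at `x₀` by paraboloids with gradient `v` from below and from above, and at `x`
by one with gradient `q` from above, then `‖q - v‖` is controlled by `‖x - x₀‖`. -/
lemma norm_sub_le_of_paraboloids {F : E → ℝ} {x₀ x v q : E} {C K : ℝ}
    (hlow : ∀ z, F x₀ + inner ℝ v (z - x₀) - C * ‖z - x₀‖ ^ 2 ≤ F z)
    (hup₀ : ∀ z, F z ≤ F x₀ + inner ℝ v (z - x₀) + K * ‖z - x₀‖ ^ 2)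
    (hup : ∀ z, F z ≤ F x + inner ℝ q (z - x) + K * ‖z - x‖ ^ 2)
    (hC : 0 ≤ C) (hx : x = x₀ → q = v) :
    ‖q - v‖ ≤ (4 * C + 2 * K) * ‖x - x₀‖ := by
  rcases eq_or_ne x x₀ with h | hne
  · simp [hx h, h]
  rcases eq_or_ne q v with h | hqv
  · have h1 := hlow x
    have h2 := hup₀ x
    have h3 : 0 < ‖x - x₀‖ := norm_pos_iff.2 (sub_ne_zero.2 hne)
    have h4 : 0 ≤ C + K := by
      by_contra! hneg
      nlinarith [mul_pos_of_neg_of_neg hneg (neg_lt_zero.2 (pow_pos h3 2))]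
    rw [h, sub_self, norm_zero]
    nlinarith [mul_nonneg hC h3.le, mul_nonneg h4 h3.le]
  have hr : 0 < ‖x - x₀‖ := norm_pos_iff.2 (sub_ne_zero.2 hne)
  have hn : 0 < ‖v - q‖ := norm_pos_iff.2 (sub_ne_zero.2 hqv.symm)
  -- The optimal test direction is that of `v - q`, at the scale `‖x - x₀‖`.
  obtain ⟨h, hh⟩ : ∃ h, h = (‖x - x₀‖ / ‖v - q‖) • (v - q) := ⟨_, rfl⟩
  have hhn : ‖h‖ = ‖x - x₀‖ := by
    rw [hh, norm_smul, Real.norm_of_nonneg (by positivity)]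
    field_simp
  have hin : inner ℝ (v - q) h = ‖x - x₀‖ * ‖v - q‖ := by
    rw [hh, real_inner_smul_right, real_inner_self_eq_norm_sq]
    field_simp
  have e : x + h - x₀ = (x - x₀) + h := by abel
  have h1 := hlow (x + h)
  have h2 := hup₀ x
  have h3 := hup (x + h)
  have h4 : ‖(x - x₀) + h‖ ≤ 2 * ‖x - x₀‖ := by
    have := norm_add_le (x - x₀) h
    linarith
  have h5 : C * ‖(x - x₀) + h‖ ^ 2 ≤ C * (2 * ‖x - x₀‖) ^ 2 := by gcongr
  rw [e, inner_add_right] at h1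
  rw [add_sub_cancel_left, hhn] at h3
  rw [inner_sub_left] at hin
  rw [norm_sub_rev]
  refine le_of_mul_le_mul_left ?_ hr
  nlinarith

end HamiltonJacobi

/-! ### Uniqueness by the Grönwall inequality -/

section Gronwall

variable {E : Type*} [NormedAddCommGroup E] [NormedSpace ℝ E]

lemma eq_zero_right_of_norm_deriv_le {δ δ' : ℝ → E} {L a b : ℝ}
    (hδ : ∀ t ∈ Set.Icc a b, HasDerivAt δ (δ' t) t)
    (hL : ∀ t ∈ Set.Icc a b, ‖δ' t‖ ≤ L * ‖δ t‖) (ha : δ a = 0) :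
    ∀ t ∈ Set.Icc a b, δ t = 0 := by
  intro t ht
  have := norm_le_gronwallBound_of_norm_deriv_right_le (f := δ) (f' := δ') (δ := 0) (K := L)
    (ε := 0) (a := a) (b := b) (fun s hs => (hδ s hs).continuousAt.continuousWithinAt)
    (fun s hs => (hδ s ⟨hs.1, hs.2.le⟩).hasDerivWithinAt) (by simp [ha])
    (fun s hs => by simpa using hL s ⟨hs.1, hs.2.le⟩) t ht
  simpa [gronwallBound_ε0] using this

lemma eq_zero_left_of_norm_deriv_le {δ δ' : ℝ → E} {L a b : ℝ}
    (hδ : ∀ t ∈ Set.Icc a b, HasDerivAt δ (δ' t) t)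
    (hL : ∀ t ∈ Set.Icc a b, ‖δ' t‖ ≤ L * ‖δ t‖) (hb : δ b = 0) :
    ∀ t ∈ Set.Icc a b, δ t = 0 := by
  intro t ht
  have := eq_zero_right_of_norm_deriv_le (δ := fun s => δ (-s)) (δ' := fun s => -δ' (-s))
    (L := L) (a := -b) (b := -a)
    (fun s hs => by
      have h := hδ (-s) ⟨by linarith [hs.2], by linarith [hs.1]⟩
      simpa [Function.comp_def] using h.scomp s (hasDerivAt_neg s))
    (fun s hs => by
      simpa using hL (-s) ⟨by linarith [hs.2], by linarith [hs.1]⟩)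
    (by simpa using hb) (-t) ⟨by linarith [ht.2], by linarith [ht.1]⟩
  simpa using this

end Gronwall

/-! ### Lipschitz bound for the gradient along a geodesic -/

section GradientBound

variable {E : Type*} [NormedAddCommGroup E] [InnerProductSpace ℝ E] [FiniteDimensional ℝ E]

/-- The touching paraboloid from above, written in terms of the gradient. -/
lemma hjShift_le_paraboloid {f : E → ℝ} (hf : Continuous f) {C : ℝ}
    (hC : ∀ x, |f x| ≤ C) {t : ℝ} (ht : 0 < t) (x : E)
    (hd : DifferentiableAt ℝ (hjShift t f) x) (z : E) :
    hjShift t f z ≤ hjShift t f x + inner ℝ (gradient (hjShift t f) x) (z - x) +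
      1 / (2 * t) * ‖z - x‖ ^ 2 := by
  have h1 := exists_min_gradient hf hC ht x hd
  set q := gradient (hjShift t f) x
  have h2 := hjShift_le hC ht z (x - t • q)
  have h3 : ‖z - (x - t • q)‖ ^ 2 = ‖z - x‖ ^ 2 + 2 * (t * inner ℝ q (z - x)) +
      (t * ‖q‖) ^ 2 := by
    rw [show z - (x - t • q) = (z - x) + t • q by abel, norm_add_sq_real, real_inner_smul_right,
      norm_smul, Real.norm_of_nonneg ht.le, real_inner_comm]
  rw [h3] at h2
  have h4 : (‖z - x‖ ^ 2 + 2 * (t * inner ℝ q (z - x)) + (t * ‖q‖) ^ 2) / (2 * t) =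
      1 / (2 * t) * ‖z - x‖ ^ 2 + inner ℝ q (z - x) + t * ‖q‖ ^ 2 / 2 := by
    field_simp
  linarith

/-- Suppose the gradients of `f_s` at `p + s • v` and of `f_T` at `p + T • v` both equal `v`, where
`s < T`. Then the gradient of `f_s` is Lipschitz at the point `p + s • v`. -/
lemma norm_gradient_sub_le {f : E → ℝ} (hf : Continuous f) {C : ℝ}
    (hC : ∀ x, |f x| ≤ C) {s T : ℝ} (hs : 0 < s) (hsT : s < T) (p v : E)
    (hd : Differentiable ℝ (hjShift s f)) (hdT : Differentiable ℝ (hjShift T f))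
    (hgs : gradient (hjShift s f) (p + s • v) = v)
    (hgT : gradient (hjShift T f) (p + T • v) = v) (x : E) :
    ‖gradient (hjShift s f) x - v‖ ≤ (2 / (T - s) + 1 / s) * ‖x - (p + s • v)‖ := by
  have hr : 0 < T - s := sub_pos.2 hsT
  have es := exists_min_gradient hf hC hs (p + s • v) (hd _)
  have eT := exists_min_gradient hf hC (hs.trans hsT) (p + T • v) (hdT _)
  rw [hgs, add_sub_cancel_right] at es
  rw [hgT, add_sub_cancel_right] at eT
  have key := norm_sub_le_of_paraboloids (F := hjShift s f) (x₀ := p + s • v) (x := x) (v := v)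
    (q := gradient (hjShift s f) x) (C := 1 / (2 * (T - s))) (K := 1 / (2 * s))
    (fun z => by
      have h1 := hjShift_le_add hf hC hs hsT z (p + T • v)
      have h2 : ‖p + T • v - z‖ ^ 2 = ((T - s) * ‖v‖) ^ 2 -
          2 * ((T - s) * inner ℝ v (z - (p + s • v))) + ‖z - (p + s • v)‖ ^ 2 := by
        rw [show p + T • v - z = (T - s) • v - (z - (p + s • v)) by rw [sub_smul]; abel,
          norm_sub_sq_real, real_inner_smul_left, norm_smul, Real.norm_of_nonneg hr.le]
      have h3 : (((T - s) * ‖v‖) ^ 2 -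
          2 * ((T - s) * inner ℝ v (z - (p + s • v))) + ‖z - (p + s • v)‖ ^ 2) / (2 * (T - s)) =
          (T - s) * ‖v‖ ^ 2 / 2 - inner ℝ v (z - (p + s • v)) +
            1 / (2 * (T - s)) * ‖z - (p + s • v)‖ ^ 2 := by
        field_simp
      rw [h2, h3] at h1
      linarith)
    (fun z => by simpa only [hgs] using hjShift_le_paraboloid hf hC hs (p + s • v) (hd _) z)
    (fun z => hjShift_le_paraboloid hf hC hs x (hd _) z)
    (by positivity) (fun h => by rw [h, hgs])
  convert key using 2
  field_simp
  ring

end GradientBound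

/-- Euclidean case of Claim 2.1: if `γ` is an affine segment which is a gradient curve of the
Hamilton–Jacobi shifted family `f_t = HJ_t f₀` on `(0,1)`, and `α` is a locally Lipschitz
gradient curve of the same family meeting `γ` at some time `t₀ ∈ (0,1)`, then `α = γ` on
all of `(0,1)`. -/
theorem gradient_curve_agrees_with_geodesic (m : ℕ) (hm : 0 < m)
    (f₀ : EuclideanSpace ℝ (Fin m) → ℝ)
    (hcont : Continuous f₀) (hbdd : ∃ C : ℝ, ∀ x, |f₀ x| ≤ C)
    (hdiff : ∀ t ∈ Set.Ioo (0:ℝ) 1, Differentiable ℝ (hjShift t f₀))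
    (γ : ℝ → EuclideanSpace ℝ (Fin m))
    (haff : ∀ t : ℝ, γ t = (1 - t) • γ 0 + t • γ 1)
    (hγ : ∀ t ∈ Set.Ioo (0:ℝ) 1, HasDerivAt γ (gradient (hjShift t f₀) (γ t)) t)
    (α : ℝ → EuclideanSpace ℝ (Fin m))
    (hlip : LocallyLipschitzOn (Set.Ioo (0:ℝ) 1) α)
    (hα : ∀ t ∈ Set.Ioo (0:ℝ) 1, HasDerivAt α (gradient (hjShift t f₀) (α t)) t)
    (t₀ : ℝ) (ht₀ : t₀ ∈ Set.Ioo (0:ℝ) 1) (heq : α t₀ = γ t₀) :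
    ∀ t ∈ Set.Ioo (0:ℝ) 1, α t = γ t := by
  obtain ⟨C, hC⟩ := hbdd
  obtain ⟨v, hv⟩ : ∃ v, v = γ 1 - γ 0 := ⟨_, rfl⟩
  have haff' : ∀ t, γ t = γ 0 + t • v := fun t => by
    rw [haff t, hv, sub_smul, one_smul, smul_sub]; abel
  have hγv : ∀ t, HasDerivAt γ v t := fun t => by
    rw [show γ = fun t => γ 0 + t • v from funext haff']
    simpa using ((hasDerivAt_id t).smul_const v).const_add (γ 0)
  have hgrad : ∀ t ∈ Set.Ioo (0:ℝ) 1, gradient (hjShift t f₀) (γ 0 + t • v) = v := fun t ht => by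
    rw [← haff' t]; exact (hγ t ht).unique (hγv t)
  -- The Lipschitz constant at time `s`, uniform on compact subintervals `[a, b]`; the later time
  -- `T` is the midpoint of `b` and `1`.
  have hbound : ∀ a b : ℝ, 0 < a → b < 1 → ∃ L : ℝ, ∀ s ∈ Set.Icc a b,
      ‖gradient (hjShift s f₀) (α s) - v‖ ≤ L * ‖α s - γ s‖ := by
    intro a b ha hb
    refine ⟨2 / ((b + 1) / 2 - b) + 1 / a, fun s hs => ?_⟩
    have hs0 : 0 < s := ha.trans_le hs.1
    have hsT : s < (b + 1) / 2 := by linarith [hs.2]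
    have hsI : s ∈ Set.Ioo (0:ℝ) 1 := ⟨hs0, by linarith [hs.2]⟩
    have hTI : (b + 1) / 2 ∈ Set.Ioo (0:ℝ) 1 := ⟨hs0.trans hsT, by linarith⟩
    have h := norm_gradient_sub_le hcont hC hs0 hsT (γ 0) v (hdiff s hsI) (hdiff _ hTI)
      (hgrad s hsI) (hgrad _ hTI) (α s)
    rw [← haff' s] at h
    refine h.trans ?_
    have hpos : 0 < (b + 1) / 2 - b := by linarith
    have := hs.1
    have := hs.2
    gcongr
  have hδ : ∀ s ∈ Set.Ioo (0:ℝ) 1, HasDerivAt (fun s => α s - γ s)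
      (gradient (hjShift s f₀) (α s) - v) s := fun s hs => (hα s hs).sub (hγv s)
  intro t ht
  rw [← sub_eq_zero]
  rcases le_total t₀ t with h | h
  · obtain ⟨L, hL⟩ := hbound t₀ t ht₀.1 ht.2
    exact eq_zero_right_of_norm_deriv_le (δ := fun s => α s - γ s)
      (fun s hs => hδ s ⟨ht₀.1.trans_le hs.1, hs.2.trans_lt ht.2⟩) hL (sub_eq_zero.2 heq) t
      ⟨h, le_rfl⟩
  · obtain ⟨L, hL⟩ := hbound t t₀ ht.1 ht₀.2
    exact eq_zero_left_of_norm_deriv_le (δ := fun s => α s - γ s)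
      (fun s hs => hδ s ⟨ht.1.trans_le hs.1, hs.2.trans_lt ht₀.2⟩) hL (sub_eq_zero.2 heq) t
      ⟨le_rfl, h⟩
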